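/- Let (H,α,R) be a quasitriangular Hom-Hopf algebra, (B,β,⟨|⟩) a coquasitriangular Hom-Hopf algebra, and (M,μ_M),(N,ν_N) (H,B)-Hom-Long dimodules, each equipped with the (H⊗B)-Hom-module action (h⊗x)⇀m=⟨x|m₋₁⟩ α⁻³(h)·μ⁻¹(m₀) and (H⊗B)-Hom-comodule coaction ρ̄(m)=m_[-1]⊗m_[0]=(R²⊗β⁻³(m₋₁))⊗(R¹·μ⁻¹(m₀)), where γ=α⊗β. Then the Hom-Yetter-Drinfeld pre-braiding coincides with the Hom-Long braiding: for all m∈M, n∈N, γ²(m_[-1])⇀ν_N⁻¹(n) ⊗ μ_M⁻¹(m_[0]) = ⟨m₋₁|n₋₁⟩ R²·ν_N⁻²(n₀) ⊗ R¹·μ_M⁻²(m₀). -/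

import Mathlib

/-!
Writing everything out with `R = R¹ ⊗ R²`, the pre-braiding equals
`⟨β⁻¹(m₋₁)|β⁻¹(n₋₁)⟩ α⁻¹(R²)·ν⁻²(n₀) ⊗ α⁻¹(R¹)·μ⁻²(m₀)`: the exponents of `α` and `β` come from
`α⁻³ ∘ α²` and `β² ∘ β⁻³`, and `ν⁻¹`, `μ⁻¹` pass through the coaction of `N`
(`LongDimodule.coact_auto_symm`) and the action on `M` (`LongDimodule.auto_symm_act`).
The remaining inverses cancel because the form is `β`-invariant (`CQTHomHopf.form_auto_symm`) and
`R` is fixed by `α ⊗ α` (`QTHomHopf.map_auto_symm_R`). By linearity it suffices to compare the two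
sides on pure tensors.
-/

open TensorProduct

/-- A Hom-bialgebra `(H, α)` over a field `k`. -/
structure HomBialgebra (k : Type*) [Field k] (H : Type*) [AddCommGroup H] [Module k H] where
  mul : H →ₗ[k] H →ₗ[k] H
  one : H
  comul : H →ₗ[k] H ⊗[k] H
  counit : H →ₗ[k] k
  auto : H ≃ₗ[k] H
  auto_mul : ∀ h h' : H, auto (mul h h') = mul (auto h) (auto h')
  auto_one : auto one = one
  hom_assoc : ∀ h h' h'' : H, mul (auto h) (mul h' h'') = mul (mul h h') (auto h'')
  mul_one' : ∀ h : H, mul h one = auto h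
  one_mul' : ∀ h : H, mul one h = auto h
  comul_auto : ∀ h : H,
    comul (auto h) = TensorProduct.map auto.toLinearMap auto.toLinearMap (comul h)
  counit_auto : ∀ h : H, counit (auto h) = counit h
  hom_coassoc : ∀ h : H,
    TensorProduct.map auto.toLinearMap comul (comul h)
      = TensorProduct.assoc k H H H (TensorProduct.map comul auto.toLinearMap (comul h))
  counit_comul : ∀ h : H,
    TensorProduct.lid k H (TensorProduct.map counit (LinearMap.id : H →ₗ[k] H) (comul h)) = auto h
  comul_counit : ∀ h : H,
    TensorProduct.rid k H (TensorProduct.map (LinearMap.id : H →ₗ[k] H) counit (comul h)) = auto h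
  comul_mul : ∀ h h' : H,
    comul (mul h h')
      = TensorProduct.map (TensorProduct.lift mul) (TensorProduct.lift mul)
          (TensorProduct.tensorTensorTensorComm k H H H H (comul h ⊗ₜ[k] comul h'))
  comul_one : comul one = one ⊗ₜ[k] one
  counit_mul : ∀ h h' : H, counit (mul h h') = counit h * counit h'
  counit_one : counit one = 1

/-- A Hom-Hopf algebra: a Hom-bialgebra with an antipode. -/
structure HomHopf (k : Type*) [Field k] (H : Type*) [AddCommGroup H] [Module k H]
    extends HomBialgebra k H where
  antipode : H →ₗ[k] H
  antipode_left : ∀ h : H,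
    TensorProduct.lift mul (TensorProduct.map antipode (LinearMap.id : H →ₗ[k] H) (comul h))
      = counit h • one
  antipode_right : ∀ h : H,
    TensorProduct.lift mul (TensorProduct.map (LinearMap.id : H →ₗ[k] H) antipode (comul h))
      = counit h • one
  antipode_auto : ∀ h : H, antipode (auto h) = auto (antipode h)

/-- A quasitriangular Hom-Hopf algebra `(H, α, R)`. -/
structure QTHomHopf (k : Type*) [Field k] (H : Type*) [AddCommGroup H] [Module k H]
    extends HomHopf k H where
  R : H ⊗[k] H
  qha1a : TensorProduct.lid k H (TensorProduct.map counit (LinearMap.id : H →ₗ[k] H) R) = one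
  qha1b : TensorProduct.rid k H (TensorProduct.map (LinearMap.id : H →ₗ[k] H) counit R) = one
  qha2 : TensorProduct.map comul auto.toLinearMap R
      = TensorProduct.map (TensorProduct.map auto.toLinearMap auto.toLinearMap)
          (TensorProduct.lift mul)
          (TensorProduct.tensorTensorTensorComm k H H H H (R ⊗ₜ[k] R))
  qha3 : TensorProduct.map auto.toLinearMap comul R
      = TensorProduct.map (TensorProduct.lift mul)
          ((TensorProduct.comm k H H).toLinearMap ∘ₗ
            TensorProduct.map auto.toLinearMap auto.toLinearMap)
          (TensorProduct.tensorTensorTensorComm k H H H H (R ⊗ₜ[k] R))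
  qha4 : ∀ h : H,
    TensorProduct.map (TensorProduct.lift mul) (TensorProduct.lift mul)
        (TensorProduct.tensorTensorTensorComm k H H H H
          ((TensorProduct.comm k H H (comul h)) ⊗ₜ[k] R))
      = TensorProduct.map (TensorProduct.lift mul) (TensorProduct.lift mul)
          (TensorProduct.tensorTensorTensorComm k H H H H (R ⊗ₜ[k] comul h))
  qha5 : TensorProduct.map auto.toLinearMap auto.toLinearMap R = R

/-- Triangularity: `R⁻¹ = R² ⊗ R¹`, i.e. `r²R¹ ⊗ r¹R² = 1 ⊗ 1`. -/
def QTHomHopf.IsTriangular {k : Type*} [Field k] {H : Type*} [AddCommGroup H] [Module k H]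
    (HQ : QTHomHopf k H) : Prop :=
  TensorProduct.map (TensorProduct.lift HQ.mul) (TensorProduct.lift HQ.mul)
      (TensorProduct.tensorTensorTensorComm k H H H H
        ((TensorProduct.comm k H H HQ.R) ⊗ₜ[k] HQ.R))
    = HQ.one ⊗ₜ[k] HQ.one

/-- A coquasitriangular Hom-Hopf algebra `(B, β, ⟨|⟩)`. -/
structure CQTHomHopf (k : Type*) [Field k] (B : Type*) [AddCommGroup B] [Module k B]
    extends HomHopf k B where
  form : B →ₗ[k] B →ₗ[k] k
  cha1 : ∀ h g l : B, form (mul h g) (auto l)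
      = LinearMap.mul' k k (TensorProduct.map (form (auto g)) (form (auto h)) (comul l))
  cha2 : ∀ h g l : B, form (auto h) (mul g l)
      = LinearMap.mul' k k
          (TensorProduct.map (form.flip (auto g)) (form.flip (auto l)) (comul h))
  cha3 : ∀ h g : B,
    TensorProduct.lid k B (TensorProduct.map (TensorProduct.lift form)
        ((TensorProduct.lift mul) ∘ₗ (TensorProduct.comm k B B).toLinearMap)
        (TensorProduct.tensorTensorTensorComm k B B B B (comul h ⊗ₜ[k] comul g)))
      = TensorProduct.rid k B
          (TensorProduct.map (TensorProduct.lift mul) (TensorProduct.lift form)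
            (TensorProduct.tensorTensorTensorComm k B B B B (comul h ⊗ₜ[k] comul g)))
  cha4a : ∀ h : B, form one h = counit h
  cha4b : ∀ h : B, form h one = counit h
  cha5 : ∀ h g : B, form (auto h) (auto g) = form h g

/-- Cotriangularity: `⟨h₁|g₁⟩⟨g₂|h₂⟩ = ε(h)ε(g)`. -/
def CQTHomHopf.IsCotriangular {k : Type*} [Field k] {B : Type*} [AddCommGroup B] [Module k B]
    (BC : CQTHomHopf k B) : Prop :=
  ∀ h g : B,
    LinearMap.mul' k k (TensorProduct.map (TensorProduct.lift BC.form)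
        ((TensorProduct.lift BC.form) ∘ₗ (TensorProduct.comm k B B).toLinearMap)
        (TensorProduct.tensorTensorTensorComm k B B B B (BC.comul h ⊗ₜ[k] BC.comul g)))
      = BC.counit h * BC.counit g

/-- A left Hom-module over a Hom-bialgebra `(H, α)`. -/
structure HomModule {k : Type*} [Field k] {H : Type*} [AddCommGroup H] [Module k H]
    (HA : HomBialgebra k H) (M : Type*) [AddCommGroup M] [Module k M] where
  act : H →ₗ[k] M →ₗ[k] M
  auto : M ≃ₗ[k] M
  auto_act : ∀ (h : H) (m : M), auto (act h m) = act (HA.auto h) (auto m)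
  act_act : ∀ (h h' : H) (m : M), act (HA.auto h) (act h' m) = act (HA.mul h h') (auto m)
  one_act : ∀ m : M, act HA.one m = auto m

/-- A left Hom-comodule over a Hom-bialgebra `(B, β)`. -/
structure HomComodule {k : Type*} [Field k] {B : Type*} [AddCommGroup B] [Module k B]
    (BA : HomBialgebra k B) (M : Type*) [AddCommGroup M] [Module k M] where
  coact : M →ₗ[k] B ⊗[k] M
  auto : M ≃ₗ[k] M
  coact_auto : ∀ m : M,
    coact (auto m) = TensorProduct.map BA.auto.toLinearMap auto.toLinearMap (coact m)
  counit_coact : ∀ m : M,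
    TensorProduct.lid k M (TensorProduct.map BA.counit (LinearMap.id : M →ₗ[k] M) (coact m))
      = auto m
  hom_coassoc : ∀ m : M,
    TensorProduct.map BA.auto.toLinearMap coact (coact m)
      = TensorProduct.assoc k B B M
          (TensorProduct.map BA.comul auto.toLinearMap (coact m))

/-- A Hom-algebra `(A, γ)`. -/
structure HomAlgebra (k : Type*) [Field k] (A : Type*) [AddCommGroup A] [Module k A] where
  mul : A →ₗ[k] A →ₗ[k] A
  one : A
  auto : A ≃ₗ[k] A
  auto_mul : ∀ a a' : A, auto (mul a a') = mul (auto a) (auto a')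
  auto_one : auto one = one
  hom_assoc : ∀ a a' a'' : A, mul (auto a) (mul a' a'') = mul (mul a a') (auto a'')
  mul_one' : ∀ a : A, mul a one = auto a
  one_mul' : ∀ a : A, mul one a = auto a

/-- A left Hom-module over a Hom-algebra `(A, γ)`. -/
structure HomModuleAlg {k : Type*} [Field k] {A : Type*} [AddCommGroup A] [Module k A]
    (AA : HomAlgebra k A) (M : Type*) [AddCommGroup M] [Module k M] where
  act : A →ₗ[k] M →ₗ[k] M
  auto : M ≃ₗ[k] M
  auto_act : ∀ (a : A) (m : M), auto (act a m) = act (AA.auto a) (auto m)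
  act_act : ∀ (a a' : A) (m : M), act (AA.auto a) (act a' m) = act (AA.mul a a') (auto m)
  one_act : ∀ m : M, act AA.one m = auto m

/-- An `(H, B)`-Hom-Long dimodule. -/
structure LongDimodule {k : Type*} [Field k] {H B : Type*}
    [AddCommGroup H] [Module k H] [AddCommGroup B] [Module k B]
    (HA : HomBialgebra k H) (BA : HomBialgebra k B)
    (M : Type*) [AddCommGroup M] [Module k M] where
  act : H →ₗ[k] M →ₗ[k] M
  coact : M →ₗ[k] B ⊗[k] M
  auto : M ≃ₗ[k] M
  auto_act : ∀ (h : H) (m : M), auto (act h m) = act (HA.auto h) (auto m)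
  act_act : ∀ (h h' : H) (m : M), act (HA.auto h) (act h' m) = act (HA.mul h h') (auto m)
  one_act : ∀ m : M, act HA.one m = auto m
  coact_auto : ∀ m : M,
    coact (auto m) = TensorProduct.map BA.auto.toLinearMap auto.toLinearMap (coact m)
  counit_coact : ∀ m : M,
    TensorProduct.lid k M (TensorProduct.map BA.counit (LinearMap.id : M →ₗ[k] M) (coact m))
      = auto m
  hom_coassoc : ∀ m : M,
    TensorProduct.map BA.auto.toLinearMap coact (coact m)
      = TensorProduct.assoc k B B M
          (TensorProduct.map BA.comul auto.toLinearMap (coact m))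
  compat : ∀ (h : H) (m : M),
    coact (act h m)
      = TensorProduct.map BA.auto.toLinearMap (act (HA.auto h)) (coact m)

section Helpers

variable {k H B M N : Type*} [Field k]
variable [AddCommGroup H] [Module k H] [AddCommGroup B] [Module k B]
variable [AddCommGroup M] [Module k M] [AddCommGroup N] [Module k N]

/-- The diagonal Hom-action on a tensor product: `h · (m ⊗ n) = h₁·m ⊗ h₂·n`. -/
noncomputable def tAct (comul : H →ₗ[k] H ⊗[k] H)
    (actM : H →ₗ[k] M →ₗ[k] M) (actN : H →ₗ[k] N →ₗ[k] N) :
    H →ₗ[k] (M ⊗[k] N) →ₗ[k] (M ⊗[k] N) :=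
  TensorProduct.curry
    ((TensorProduct.map (TensorProduct.lift actM) (TensorProduct.lift actN)) ∘ₗ
      (TensorProduct.tensorTensorTensorComm k H H M N).toLinearMap ∘ₗ
      (TensorProduct.map comul (LinearMap.id : M ⊗[k] N →ₗ[k] M ⊗[k] N)))

/-- The Hom-coaction on a tensor product: `ρ(m ⊗ n) = β⁻²(m₋₁ n₋₁) ⊗ (m₀ ⊗ n₀)`;
here `bInv2` stands for `β⁻²`. -/
noncomputable def tCoact (mulB : B →ₗ[k] B →ₗ[k] B) (bInv2 : B →ₗ[k] B)
    (coactM : M →ₗ[k] B ⊗[k] M) (coactN : N →ₗ[k] B ⊗[k] N) :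
    (M ⊗[k] N) →ₗ[k] B ⊗[k] (M ⊗[k] N) :=
  (TensorProduct.map (bInv2 ∘ₗ TensorProduct.lift mulB)
      (LinearMap.id : M ⊗[k] N →ₗ[k] M ⊗[k] N)) ∘ₗ
    (TensorProduct.tensorTensorTensorComm k B M B N).toLinearMap ∘ₗ
    (TensorProduct.map coactM coactN)

/-- `m ⊗ n ↦ R² · aM⁻¹(n) ⊗ R¹ · aN⁻¹(m)` (quasitriangular part of the Long braiding). -/
noncomputable def braidQT (R : H ⊗[k] H)
    (actM : H →ₗ[k] M →ₗ[k] M) (actN : H →ₗ[k] N →ₗ[k] N)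
    (aM : M ≃ₗ[k] M) (aN : N ≃ₗ[k] N) : M ⊗[k] N →ₗ[k] N ⊗[k] M :=
  TensorProduct.map (TensorProduct.lift actN) (TensorProduct.lift actM) ∘ₗ
    (TensorProduct.tensorTensorTensorComm k H H N M).toLinearMap ∘ₗ
    TensorProduct.mk k (H ⊗[k] H) (N ⊗[k] M) (TensorProduct.comm k H H R) ∘ₗ
    (TensorProduct.comm k M N).toLinearMap ∘ₗ
    TensorProduct.map aM.symm.toLinearMap aN.symm.toLinearMap

/-- `m ⊗ n ↦ ⟨m₋₁|n₋₁⟩ aN⁻¹(n₀) ⊗ aM⁻¹(m₀)` (coquasitriangular braiding). -/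
noncomputable def braidCQT (form : B →ₗ[k] B →ₗ[k] k)
    (coactM : M →ₗ[k] B ⊗[k] M) (coactN : N →ₗ[k] B ⊗[k] N)
    (aM : M ≃ₗ[k] M) (aN : N ≃ₗ[k] N) : M ⊗[k] N →ₗ[k] N ⊗[k] M :=
  (TensorProduct.comm k M N).toLinearMap ∘ₗ
    TensorProduct.map aM.symm.toLinearMap aN.symm.toLinearMap ∘ₗ
    (TensorProduct.lid k (M ⊗[k] N)).toLinearMap ∘ₗ
    TensorProduct.map (TensorProduct.lift form)
      (LinearMap.id : M ⊗[k] N →ₗ[k] M ⊗[k] N) ∘ₗ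
    (TensorProduct.tensorTensorTensorComm k B M B N).toLinearMap ∘ₗ
    TensorProduct.map coactM coactN

/-- The Long-dimodule braiding
`C(m ⊗ n) = ⟨m₋₁|n₋₁⟩ R² · aN⁻²(n₀) ⊗ R¹ · aM⁻²(m₀)`. -/
noncomputable def braidL (R : H ⊗[k] H) (form : B →ₗ[k] B →ₗ[k] k)
    (actM : H →ₗ[k] M →ₗ[k] M) (actN : H →ₗ[k] N →ₗ[k] N)
    (coactM : M →ₗ[k] B ⊗[k] M) (coactN : N →ₗ[k] B ⊗[k] N)
    (aM : M ≃ₗ[k] M) (aN : N ≃ₗ[k] N) : M ⊗[k] N →ₗ[k] N ⊗[k] M :=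
  braidQT R actM actN (aM.trans aM) (aN.trans aN) ∘ₗ
    (TensorProduct.lid k (M ⊗[k] N)).toLinearMap ∘ₗ
    TensorProduct.map (TensorProduct.lift form)
      (LinearMap.id : M ⊗[k] N →ₗ[k] M ⊗[k] N) ∘ₗ
    (TensorProduct.tensorTensorTensorComm k B M B N).toLinearMap ∘ₗ
    TensorProduct.map coactM coactN

/-- The action of `H ⊗ B` on a Long dimodule:
`(h ⊗ x) ⇀ m = ⟨x|m₋₁⟩ α⁻³(h) · μ⁻¹(m₀)`; `aInv3` stands for `α⁻³`, `muInv` for `μ⁻¹`. -/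
noncomputable def actHB (form : B →ₗ[k] B →ₗ[k] k) (aInv3 : H →ₗ[k] H)
    (act : H →ₗ[k] M →ₗ[k] M) (coact : M →ₗ[k] B ⊗[k] M) (muInv : M →ₗ[k] M) :
    (H ⊗[k] B) →ₗ[k] M →ₗ[k] M :=
  TensorProduct.curry
    ((TensorProduct.lid k M).toLinearMap ∘ₗ
      TensorProduct.map (TensorProduct.lift form)
        (TensorProduct.lift act ∘ₗ TensorProduct.map aInv3 muInv) ∘ₗ
      (TensorProduct.tensorTensorTensorComm k B H B M).toLinearMap ∘ₗ
      TensorProduct.map (TensorProduct.comm k H B).toLinearMap coact)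

/-- The coaction of `H ⊗ B` on a Long dimodule:
`ρ̄(m) = (R² ⊗ β⁻³(m₋₁)) ⊗ (R¹ · μ⁻¹(m₀))`; `bInv3` stands for `β⁻³`. -/
noncomputable def coactHB (R : H ⊗[k] H) (bInv3 : B →ₗ[k] B)
    (act : H →ₗ[k] M →ₗ[k] M) (coact : M →ₗ[k] B ⊗[k] M) (muInv : M →ₗ[k] M) :
    M →ₗ[k] (H ⊗[k] B) ⊗[k] M :=
  TensorProduct.map (TensorProduct.map (LinearMap.id : H →ₗ[k] H) bInv3)
      (TensorProduct.lift act ∘ₗ TensorProduct.map (LinearMap.id : H →ₗ[k] H) muInv) ∘ₗ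
    (TensorProduct.tensorTensorTensorComm k H H B M).toLinearMap ∘ₗ
    TensorProduct.mk k (H ⊗[k] H) (B ⊗[k] M) (TensorProduct.comm k H H R) ∘ₗ
    coact

end Helpers

section Assoc

variable {k U V W : Type*} [Field k]
variable [AddCommGroup U] [Module k U] [AddCommGroup V] [Module k V] [AddCommGroup W] [Module k W]

/-- The Hom-associator `(u ⊗ v) ⊗ w ↦ aU⁻¹(u) ⊗ (v ⊗ aW(w))`. -/
noncomputable def assocL (aU : U ≃ₗ[k] U) (aW : W ≃ₗ[k] W) :
    (U ⊗[k] V) ⊗[k] W →ₗ[k] U ⊗[k] (V ⊗[k] W) :=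
  TensorProduct.map aU.symm.toLinearMap
      (TensorProduct.map (LinearMap.id : V →ₗ[k] V) aW.toLinearMap) ∘ₗ
    (TensorProduct.assoc k U V W).toLinearMap

/-- The inverse Hom-associator `u ⊗ (v ⊗ w) ↦ (aU(u) ⊗ v) ⊗ aW⁻¹(w)`. -/
noncomputable def assocLinv (aU : U ≃ₗ[k] U) (aW : W ≃ₗ[k] W) :
    U ⊗[k] (V ⊗[k] W) →ₗ[k] (U ⊗[k] V) ⊗[k] W :=
  (TensorProduct.assoc k U V W).symm.toLinearMap ∘ₗ
    TensorProduct.map aU.toLinearMap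
      (TensorProduct.map (LinearMap.id : V →ₗ[k] V) aW.symm.toLinearMap)

end Assoc

section HomLongEq

variable {k M : Type*} [Field k] [AddCommGroup M] [Module k M]

/-- `F¹² = F ⊗ μ` on `M ⊗ (M ⊗ M)`. -/
noncomputable def f12 (μ : M ≃ₗ[k] M) (F : M ⊗[k] M →ₗ[k] M ⊗[k] M) :
    M ⊗[k] (M ⊗[k] M) →ₗ[k] M ⊗[k] (M ⊗[k] M) :=
  (TensorProduct.assoc k M M M).toLinearMap ∘ₗ
    TensorProduct.map F μ.toLinearMap ∘ₗ
    (TensorProduct.assoc k M M M).symm.toLinearMap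

/-- `F²³ = μ ⊗ F` on `M ⊗ (M ⊗ M)`. -/
noncomputable def f23 (μ : M ≃ₗ[k] M) (F : M ⊗[k] M →ₗ[k] M ⊗[k] M) :
    M ⊗[k] (M ⊗[k] M) →ₗ[k] M ⊗[k] (M ⊗[k] M) :=
  TensorProduct.map μ.toLinearMap F

/-- `F¹³ = (id ⊗ τ) ∘ (F ⊗ μ) ∘ (id ⊗ τ)` on `M ⊗ (M ⊗ M)`. -/
noncomputable def f13 (μ : M ≃ₗ[k] M) (F : M ⊗[k] M →ₗ[k] M ⊗[k] M) :
    M ⊗[k] (M ⊗[k] M) →ₗ[k] M ⊗[k] (M ⊗[k] M) :=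
  TensorProduct.map (LinearMap.id : M →ₗ[k] M) (TensorProduct.comm k M M).toLinearMap ∘ₗ
    f12 μ F ∘ₗ
    TensorProduct.map (LinearMap.id : M →ₗ[k] M) (TensorProduct.comm k M M).toLinearMap

/-- The cyclic permutation `τ⁽¹²³⁾ : x ⊗ y ⊗ z ↦ z ⊗ x ⊗ y`. -/
noncomputable def cyc123 (k M : Type*) [Field k] [AddCommGroup M] [Module k M] :
    M ⊗[k] (M ⊗[k] M) →ₗ[k] M ⊗[k] (M ⊗[k] M) :=
  (TensorProduct.comm k (M ⊗[k] M) M).toLinearMap ∘ₗ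
    (TensorProduct.assoc k M M M).symm.toLinearMap

end HomLongEq

section Stmt14

variable {k H B M N : Type*} [Field k]
  [AddCommGroup H] [Module k H] [AddCommGroup B] [Module k B]
  [AddCommGroup M] [Module k M] [AddCommGroup N] [Module k N]

/-- The automorphism `γ = α ⊗ β` of `H ⊗ B`. -/
noncomputable def gammaHB (HQ : QTHomHopf k H) (BC : CQTHomHopf k B) :
    (H ⊗[k] B) →ₗ[k] H ⊗[k] B :=
  TensorProduct.map HQ.auto.toLinearMap BC.auto.toLinearMap

/-- The `(H ⊗ B)`-action `(h ⊗ x) ⇀ n = ⟨x|n₋₁⟩ α⁻³(h)·ν⁻¹(n₀)` on a Long dimodule. -/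
noncomputable def actG (HQ : QTHomHopf k H) (BC : CQTHomHopf k B)
    (LN : LongDimodule HQ.toHomBialgebra BC.toHomBialgebra N) :
    (H ⊗[k] B) →ₗ[k] N →ₗ[k] N :=
  actHB BC.form
    (HQ.auto.symm.toLinearMap ∘ₗ HQ.auto.symm.toLinearMap ∘ₗ HQ.auto.symm.toLinearMap)
    LN.act LN.coact LN.auto.symm.toLinearMap

/-- The `(H ⊗ B)`-coaction `ρ̄(m) = (R² ⊗ β⁻³(m₋₁)) ⊗ (R¹·μ⁻¹(m₀))` on a Long dimodule. -/
noncomputable def coactG (HQ : QTHomHopf k H) (BC : CQTHomHopf k B)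
    (LM : LongDimodule HQ.toHomBialgebra BC.toHomBialgebra M) :
    M →ₗ[k] (H ⊗[k] B) ⊗[k] M :=
  coactHB HQ.R
    (BC.auto.symm.toLinearMap ∘ₗ BC.auto.symm.toLinearMap ∘ₗ BC.auto.symm.toLinearMap)
    LM.act LM.coact LM.auto.symm.toLinearMap

/-- `R` is also fixed by `α⁻¹ ⊗ α⁻¹`. -/
lemma QTHomHopf.map_auto_symm_R (HQ : QTHomHopf k H) :
    TensorProduct.map HQ.auto.symm.toLinearMap HQ.auto.symm.toLinearMap HQ.R = HQ.R := by
  conv_lhs => rw [← HQ.qha5]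
  rw [← LinearMap.comp_apply, ← TensorProduct.map_comp]
  simp

lemma CQTHomHopf.form_auto_symm (BC : CQTHomHopf k B) (x y : B) :
    BC.form (BC.auto.symm x) (BC.auto.symm y) = BC.form x y := by
  rw [← BC.cha5]
  simp

/-- `ρ(ν⁻¹(n)) = β⁻¹(n₋₁) ⊗ ν⁻¹(n₀)`. -/
lemma LongDimodule.coact_auto_symm {HA : HomBialgebra k H} {BA : HomBialgebra k B}
    (LN : LongDimodule HA BA N) (n : N) :
    LN.coact (LN.auto.symm n)
      = TensorProduct.map BA.auto.symm.toLinearMap LN.auto.symm.toLinearMap (LN.coact n) := by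
  conv_rhs => rw [← LN.auto.apply_symm_apply n, LN.coact_auto]
  rw [← LinearMap.comp_apply, ← TensorProduct.map_comp]
  simp

lemma LongDimodule.auto_symm_act {HA : HomBialgebra k H} {BA : HomBialgebra k B}
    (LM : LongDimodule HA BA M) (h : H) (m : M) :
    LM.auto.symm (LM.act h m) = LM.act (HA.auto.symm h) (LM.auto.symm m) := by
  rw [LinearEquiv.symm_apply_eq, LM.auto_act]
  simp

/-- the Hom-Yetter-Drinfeld pre-braiding
`γ²(m_[-1]) ⇀ ν⁻¹(n) ⊗ μ⁻¹(m_[0])` coincides with the Hom-Long braiding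
`⟨m₋₁|n₋₁⟩ R²·ν⁻²(n₀) ⊗ R¹·μ⁻²(m₀)`. -/
theorem HYD_prebraiding_eq_long_braiding
    (HQ : QTHomHopf k H) (BC : CQTHomHopf k B)
    (LM : LongDimodule HQ.toHomBialgebra BC.toHomBialgebra M)
    (LN : LongDimodule HQ.toHomBialgebra BC.toHomBialgebra N) :
    ∀ (m : M) (n : N),
      TensorProduct.map
          ((actG HQ BC LN).flip (LN.auto.symm n) ∘ₗ gammaHB HQ BC ∘ₗ gammaHB HQ BC)
          LM.auto.symm.toLinearMap (coactG HQ BC LM m)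
        = braidL HQ.R BC.form LM.act LN.act LM.coact LN.coact LM.auto LN.auto
            (m ⊗ₜ[k] n) := by
  intro m n
  unfold actG coactG gammaHB actHB coactHB braidL braidQT
  -- On the right-hand side `R` is replaced by `(α⁻¹ ⊗ α⁻¹)(R)`: the left-hand side yields
  -- `α⁻¹(R²)` from `α⁻³ ∘ α²` and `α⁻¹(R¹)` from moving `μ⁻¹` through the action.
  conv_rhs => rw [← HQ.map_auto_symm_R]
  simp only [LinearMap.comp_apply, TensorProduct.map_tmul, LinearEquiv.coe_coe,
    TensorProduct.mk_apply]
  -- From here on the identity holds for an arbitrary tensor in place of `R` and of `m₋₁ ⊗ m₀`.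
  generalize HQ.R = r
  generalize LM.coact m = t
  induction r with
  | zero => simp
  | add r₁ r₂ h₁ h₂ => simp only [map_add, TensorProduct.add_tmul, h₁, h₂]
  | tmul a b =>
    induction t with
    | zero => simp
    | add t₁ t₂ h₁ h₂ => simp only [map_add, TensorProduct.tmul_add, TensorProduct.add_tmul, h₁, h₂]
    | tmul x p =>
      simp only [TensorProduct.comm_tmul, TensorProduct.tensorTensorTensorComm_tmul,
        TensorProduct.map_tmul, LinearMap.comp_apply, LinearMap.flip_apply,
        TensorProduct.curry_apply, LinearEquiv.coe_coe, LN.coact_auto_symm]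
      generalize LN.coact n = s
      induction s with
      | zero => simp
      | add s₁ s₂ h₁ h₂ =>
        simp only [map_add, TensorProduct.tmul_add, TensorProduct.add_tmul, h₁, h₂]
      | tmul y q =>
        simp [LM.auto_symm_act, BC.form_auto_symm, TensorProduct.smul_tmul']

end Stmt14
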